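/- Let p be an odd prime. Then ∑_{k=1}^{(p-1)/2} (C(2k,k)/(k·4^k)) · H_k^{(2)} ≡ B_{p-3}/2 (mod p), where B_0, B_1, B_2, ... are the Bernoulli numbers. -/

import Mathlib

/-- `H n` is the harmonic number `∑_{k=1}^n 1/k`. -/
def H (n : ℕ) : ℚ := ∑ k ∈ Finset.Icc 1 n, (1 : ℚ) / k

/-- `H2 n` is the second-order harmonic number `∑_{k=1}^n 1/k²`. -/
def H2 (n : ℕ) : ℚ := ∑ k ∈ Finset.Icc 1 n, (1 : ℚ) / k ^ 2

/-- The Euler numbers: `E 0 = 1` and `∑_{0 ≤ k ≤ n, k even} C(n,k) E_{n-k} = 0` for `n ≥ 1`. -/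
def eulerNumber : ℕ → ℚ
  | 0 => 1
  | n + 1 =>
      -∑ j ∈ (Finset.range (n + 1)).attach,
        if Even (n + 1 - j.1) then ((n + 1).choose (n + 1 - j.1) : ℚ) * eulerNumber j.1 else 0
decreasing_by exact Finset.mem_range.mp j.2

/-- For rationals, `a ≡ b (mod m)` : `m` divides the numerator of `a - b` in lowest terms. -/
def ratModEq (m : ℕ) (a b : ℚ) : Prop := (m : ℤ) ∣ (a - b).num



open Finset

theorem icc_sum {M : Type*} [AddCommMonoid M] (f : ℕ → M) (n : ℕ) :
    ∑ k ∈ Icc 1 n, f k = ∑ k ∈ range n, f (k + 1) := by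
  induction n with
  | zero => simp
  | succ n ih => rw [Finset.sum_Icc_succ_top (by omega), ih, Finset.sum_range_succ]

/-- `x` is `p`-integral with reduction `z`. -/
def Red (p : ℕ) [Fact p.Prime] (x : ℚ) (z : ZMod p) : Prop :=
  (x.den : ZMod p) ≠ 0 ∧ (x : ZMod p) = z

section red
variable {p : ℕ} [Fact p.Prime]

theorem Red.of_int (a b : ℤ) (hb : (b : ZMod p) ≠ 0) :
    Red p ((a : ℚ) / b) ((a : ZMod p) / b) := by
  have hb0 : b ≠ 0 := by rintro rfl; simp at hb
  constructor
  · intro h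
    have h1 : (((a : ℚ) / b).den : ℤ) ∣ b := by
      have := Rat.den_dvd a b
      simpa [Rat.divInt_eq_div] using this
    obtain ⟨c, hc⟩ := h1
    apply hb
    rw [hc]; push_cast; rw [h]; simp
  · rw [Rat.cast_div_of_ne_zero] <;> simp [hb]

theorem Red.exists_int {x : ℚ} {z : ZMod p} (h : Red p x z) :
    ∃ a b : ℤ, (b : ZMod p) ≠ 0 ∧ (b : ℚ) ≠ 0 ∧ x = a / b ∧ z = a / b := by
  refine ⟨x.num, x.den, by simpa using h.1, by simp, by simp [Rat.num_div_den], ?_⟩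
  rw [← h.2, Rat.cast_def]; simp

theorem Red.add {x y : ℚ} {z w : ZMod p} (h : Red p x z) (h' : Red p y w) :
    Red p (x + y) (z + w) := by
  obtain ⟨a, b, hb, hb', rfl, rfl⟩ := h.exists_int
  obtain ⟨c, d, hd, hd', rfl, rfl⟩ := h'.exists_int
  rw [div_add_div _ _ hb' hd', div_add_div _ _ hb hd]
  have := Red.of_int (p := p) (a * d + b * c) (b * d) (by push_cast; exact mul_ne_zero hb hd)
  exact_mod_cast this

theorem Red.mul {x y : ℚ} {z w : ZMod p} (h : Red p x z) (h' : Red p y w) :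
    Red p (x * y) (z * w) := by
  obtain ⟨a, b, hb, hb', rfl, rfl⟩ := h.exists_int
  obtain ⟨c, d, hd, hd', rfl, rfl⟩ := h'.exists_int
  rw [div_mul_div_comm, div_mul_div_comm]
  have := Red.of_int (p := p) (a * c) (b * d) (by push_cast; exact mul_ne_zero hb hd)
  exact_mod_cast this

theorem Red.inv {x : ℚ} {z : ZMod p} (h : Red p x z) (hz : z ≠ 0) : Red p x⁻¹ z⁻¹ := by
  obtain ⟨a, b, hb, hb', rfl, rfl⟩ := h.exists_int
  rw [inv_div, inv_div]
  exact Red.of_int _ _ (fun h0 => hz (by simp [h0]))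

theorem Red.div {x y : ℚ} {z w : ZMod p} (h : Red p x z) (h' : Red p y w) (hw : w ≠ 0) :
    Red p (x / y) (z / w) := by
  rw [div_eq_mul_inv, div_eq_mul_inv]; exact h.mul (h'.inv hw)

theorem Red.int (a : ℤ) : Red p (a : ℚ) (a : ZMod p) := by
  have := Red.of_int (p := p) a 1 (by simp)
  simpa using this

theorem Red.nat (a : ℕ) : Red p (a : ℚ) (a : ZMod p) := by
  have := Red.int (p := p) a
  simpa using this

theorem Red.one : Red p (1 : ℚ) (1 : ZMod p) := by
  have := Red.int (p := p) 1
  simpa using this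

theorem Red.neg {x : ℚ} {z : ZMod p} (h : Red p x z) : Red p (-x) (-z) := by
  have := (Red.int (p := p) (-1)).mul h
  simpa using this

theorem Red.sub {x y : ℚ} {z w : ZMod p} (h : Red p x z) (h' : Red p y w) :
    Red p (x - y) (z - w) := by
  rw [sub_eq_add_neg, sub_eq_add_neg]; exact h.add h'.neg

theorem Red.pow {x : ℚ} {z : ZMod p} (h : Red p x z) (n : ℕ) : Red p (x ^ n) (z ^ n) := by
  induction n with
  | zero => simpa using Red.one
  | succ n ih => rw [pow_succ, pow_succ]; exact ih.mul h

theorem Red.sum {ι : Type*} (s : Finset ι) {f : ι → ℚ} {g : ι → ZMod p}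
    (h : ∀ i ∈ s, Red p (f i) (g i)) : Red p (∑ i ∈ s, f i) (∑ i ∈ s, g i) := by
  classical
  induction s using Finset.induction_on with
  | empty => simpa using Red.nat (p := p) 0
  | insert a s ha ih =>
    rw [Finset.sum_insert ha, Finset.sum_insert ha]
    exact (h a (by simp)).add (ih fun i hi => h i (by simp [hi]))

theorem Red.unique {x : ℚ} {z w : ZMod p} (h : Red p x z) (h' : Red p x w) : z = w :=
  h.2.symm.trans h'.2

theorem Red.modEq {x y : ℚ} {z : ZMod p} (h : Red p x z) (h' : Red p y z) : ratModEq p x y := by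
  have h0 := h.sub h'
  rw [sub_self] at h0
  unfold ratModEq
  have h2 := h0.2
  rw [Rat.cast_def, div_eq_zero_iff] at h2
  exact (ZMod.intCast_zmod_eq_zero_iff_dvd _ p).1 (h2.resolve_right h0.1)

theorem nat_ne (k : ℕ) (h0 : 0 < k) (h : k < p) : (k : ZMod p) ≠ 0 := by
  intro hk
  rw [ZMod.natCast_eq_zero_iff] at hk
  exact absurd (Nat.le_of_dvd h0 hk) (by omega)

/-- The reduction of the Bernoulli numbers. -/
noncomputable def bet (p : ℕ) [Fact p.Prime] (r : ℕ) : ZMod p := ((bernoulli r : ℚ) : ZMod p)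

theorem red_bern (r : ℕ) (hr : r + 1 < p) : Red p (bernoulli r) (bet p r) := by
  suffices h : ∃ z, Red p (bernoulli r) z by
    obtain ⟨z, hz⟩ := h
    exact ⟨hz.1, rfl⟩
  induction r using Nat.strong_induction_on with
  | _ r ih =>
    have hs := sum_bernoulli (r + 1)
    rw [Finset.sum_range_succ] at hs
    have hr0 : ((r + 1 : ℕ) : ℚ) ≠ 0 := by positivity
    have e : bernoulli r = ((if r + 1 = 1 then 1 else 0) -
        ∑ k ∈ range r, ((r + 1).choose k : ℚ) * bernoulli k) / ((r + 1 : ℕ) : ℚ) := by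
      rw [eq_div_iff hr0, ← hs]
      simp [Nat.choose_succ_self_right]; ring
    have h2 : Red p (if r + 1 = 1 then (1 : ℚ) else 0) (if r + 1 = 1 then 1 else 0) := by
      split_ifs
      · exact Red.one
      · simpa using Red.nat (p := p) 0
    have h3 : Red p (∑ k ∈ range r, ((r + 1).choose k : ℚ) * bernoulli k)
        (∑ k ∈ range r, ((r + 1).choose k : ZMod p) * bet p k) := by
      apply Red.sum
      intro k hk
      have hk := Finset.mem_range.1 hk
      obtain ⟨z, hz⟩ := ih k hk (by omega)
      exact (Red.nat _).mul ⟨hz.1, rfl⟩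
    rw [e]
    exact ⟨_, (h2.sub h3).div (Red.nat _) (nat_ne _ (by omega) hr)⟩

theorem faul (m N : ℕ) (hm : m + 1 < p) :
    ∑ k ∈ range N, (k : ZMod p) ^ m = ∑ i ∈ range (m + 1),
      bet p i * ((m + 1).choose i : ZMod p) * (N : ZMod p) ^ (m + 1 - i) / ((m + 1 : ℕ) : ZMod p) := by
  have h1 : Red p (∑ k ∈ range N, (k : ℚ) ^ m) (∑ k ∈ range N, (k : ZMod p) ^ m) :=
    Red.sum _ fun k _ => (Red.nat k).pow m
  refine h1.unique ?_
  rw [sum_range_pow]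
  apply Red.sum
  intro i hi
  have hi := Finset.mem_range.1 hi
  have := (((red_bern i (by omega)).mul (Red.nat (p := p) ((m + 1).choose i))).mul
    ((Red.nat N).pow (m + 1 - i))).div (Red.nat (m + 1)) (nat_ne _ (by omega) hm)
  simpa using this

end red

theorem bern_half (n : ℕ) :
    (Polynomial.bernoulli n).eval (1 / 2 : ℚ) = (2 * (1 / 2) ^ n - 1) * bernoulli n := by
  have h1 := Polynomial.bernoulli_generating_function (1 / 2 : ℚ)
  have h2 := bernoulliPowerSeries_mul_exp_sub_one ℚ
  have h3 := congrArg (PowerSeries.rescale (1 / 2 : ℚ)) h2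
  have hx : (PowerSeries.exp ℚ) = PowerSeries.rescale (1 / 2 : ℚ) (PowerSeries.exp ℚ) *
      PowerSeries.rescale (1 / 2 : ℚ) (PowerSeries.exp ℚ) := by
    have := PowerSeries.exp_mul_exp_eq_exp_add (A := ℚ) (1 / 2) (1 / 2)
    rw [this]; norm_num
  have hne : (PowerSeries.exp ℚ - 1) ≠ 0 := by
    intro h
    rw [h, mul_zero] at h2
    exact PowerSeries.X_ne_zero h2.symm
  have key : (PowerSeries.mk fun n => Polynomial.aeval (1 / 2 : ℚ)
        ((1 / n.factorial : ℚ) • Polynomial.bernoulli n)) =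
      2 * PowerSeries.rescale (1 / 2 : ℚ) (bernoulliPowerSeries ℚ) - bernoulliPowerSeries ℚ := by
    apply mul_right_cancel₀ hne
    rw [h1, sub_mul, h2]
    rw [map_mul, map_sub, map_one, PowerSeries.rescale_X] at h3
    have h4 : (2 : PowerSeries ℚ) * PowerSeries.C (1 / 2 : ℚ) = 1 := by
      have : (2 : PowerSeries ℚ) = PowerSeries.C (2 : ℚ) := by rw [map_ofNat]
      rw [this, ← map_mul]; norm_num
    generalize PowerSeries.rescale (1 / 2 : ℚ) (PowerSeries.exp ℚ) = E at *
    rw [hx]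
    linear_combination (-2 * (E + 1)) * h3 - (PowerSeries.X * (E + 1)) * h4
  have := congrArg (PowerSeries.coeff n) key
  have h2C : (2 : PowerSeries ℚ) = PowerSeries.C (2 : ℚ) := by rw [map_ofNat]
  rw [map_sub, h2C, PowerSeries.coeff_C_mul, PowerSeries.coeff_rescale] at this
  simp only [bernoulliPowerSeries, PowerSeries.coeff_mk] at this
  have hf : (n.factorial : ℚ) ≠ 0 := by positivity
  simp [Polynomial.aeval_def] at this
  field_simp at this
  rw [one_div_pow]
  field_simp
  linear_combination this

section comb
variable {K : Type*} [Field K]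

/-- alternating binomial transform -/
def TT (a : ℕ → K) (n : ℕ) : K := ∑ k ∈ range (n + 1), (-1) ^ k * (n.choose k : K) * a k

theorem TT_succ (a : ℕ → K) (n : ℕ) :
    TT a (n + 1) = TT a n - TT (fun k => a (k + 1)) n := by
  unfold TT
  rw [Finset.sum_range_succ' _ (n + 1)]
  have h : ∑ k ∈ range (n + 1), (-1) ^ k * (n.choose k : K) * a k =
      ∑ k ∈ range (n + 1), (-1) ^ (k + 1) * (n.choose (k + 1) : K) * a (k + 1) + a 0 := by
    have := Finset.sum_range_succ' (fun k => (-1) ^ k * (n.choose k : K) * a k) (n + 1)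
    rw [Finset.sum_range_succ] at this
    simpa using this
  rw [h, add_sub_right_comm, ← Finset.sum_sub_distrib]
  congr 1
  · apply Finset.sum_congr rfl
    intro k _
    rw [Nat.choose_succ_succ]; push_cast; ring
  · simp

theorem TT_div (b : ℕ → K) (n : ℕ) (h : ∀ k : ℕ, 0 < k → k ≤ n + 1 → (k : K) ≠ 0) :
    TT (fun k => b (k + 1) / ((k + 1 : ℕ) : K)) n = (b 0 - TT b (n + 1)) / ((n + 1 : ℕ) : K) := by
  rw [eq_div_iff (h _ (by omega) le_rfl)]
  unfold TT
  rw [Finset.sum_range_succ' _ (n + 1), Finset.sum_mul]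
  simp only [pow_zero, Nat.choose_zero_right, Nat.cast_one, one_mul]
  rw [sub_add_cancel_right, ← Finset.sum_neg_distrib]
  apply Finset.sum_congr rfl
  intro k hk
  have hk := Finset.mem_range.1 hk
  have h1 := h (k + 1) (by omega) (by omega)
  have h2 : ((n + 1 : ℕ) : K) * (n.choose k : K) = ((n + 1).choose (k + 1) : K) * ((k + 1 : ℕ) : K) := by
    exact_mod_cast congrArg (Nat.cast (R := K)) (Nat.add_one_mul_choose_eq n k)
  field_simp
  linear_combination ((-1) ^ k * b (k + 1)) * h2

theorem TT_divk (b : ℕ → K) (n : ℕ) (h : ∀ k : ℕ, 0 < k → k ≤ n + 1 → (k : K) ≠ 0) :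
    TT (fun k => b k / (k : K)) (n + 1) = TT (fun k => b k / (k : K)) n +
      (TT b (n + 1) - b 0) / ((n + 1 : ℕ) : K) := by
  rw [TT_succ, TT_div b n h]; ring

theorem TT_one (n : ℕ) : TT (fun _ => (1 : K)) (n + 1) = 0 := by
  rw [TT_succ]; simp

theorem TT_inv (n : ℕ) (h : ∀ k : ℕ, 0 < k → k ≤ n → (k : K) ≠ 0) :
    TT (fun k => 1 / (k : K)) n = - ∑ i ∈ range n, 1 / ((i + 1 : ℕ) : K) := by
  induction n with
  | zero => simp [TT]
  | succ n ih =>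
    have := TT_divk (fun _ => (1 : K)) n h
    rw [this, ih fun k h0 hk => h k h0 (by omega), TT_one, Finset.sum_range_succ]
    ring

theorem TT_H2 (n : ℕ) (h : ∀ k : ℕ, 0 < k → k ≤ n + 1 → (k : K) ≠ 0) :
    TT (fun k => ∑ i ∈ range k, 1 / ((i + 1 : ℕ) : K) ^ 2) (n + 1) =
      - (∑ i ∈ range (n + 1), 1 / ((i + 1 : ℕ) : K)) / ((n + 1 : ℕ) : K) := by
  have e := TT_div (fun k => 1 / (k : K)) n h
  rw [TT_inv _ h] at e
  rw [TT_succ]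
  have : TT (fun k => ∑ i ∈ range (k + 1), 1 / ((i + 1 : ℕ) : K) ^ 2) n =
      TT (fun k => ∑ i ∈ range k, 1 / ((i + 1 : ℕ) : K) ^ 2) n +
      TT (fun k => 1 / ((k + 1 : ℕ) : K) / ((k + 1 : ℕ) : K)) n := by
    unfold TT
    rw [← Finset.sum_add_distrib]
    apply Finset.sum_congr rfl
    intro k _
    beta_reduce
    rw [Finset.sum_range_succ, div_div, ← pow_two]; ring
  rw [this, e]; simp; ring

theorem TT_main (n : ℕ) (h : ∀ k : ℕ, 0 < k → k ≤ n → (k : K) ≠ 0) :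
    TT (fun k => (∑ i ∈ range k, 1 / ((i + 1 : ℕ) : K) ^ 2) / (k : K)) n =
      - ∑ j ∈ range n, (∑ i ∈ range (j + 1), 1 / ((i + 1 : ℕ) : K)) / ((j + 1 : ℕ) : K) ^ 2 := by
  induction n with
  | zero => simp [TT]
  | succ n ih =>
    have := TT_divk (fun k => ∑ i ∈ range k, 1 / ((i + 1 : ℕ) : K) ^ 2) n h
    rw [this, ih fun k h0 hk => h k h0 (by omega), TT_H2 n h,
      Finset.sum_range_succ (fun j => (∑ i ∈ range (j + 1), 1 / ((i + 1 : ℕ) : K)) /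
        ((j + 1 : ℕ) : K) ^ 2)]
    have := h (n + 1) (by omega) le_rfl
    simp only [Finset.range_zero, Finset.sum_empty, sub_zero]
    rw [div_div, ← pow_two]
    ring

end comb

section final
variable {p : ℕ} [Fact p.Prime]

theorem half_sum (m : ℕ) (hm : m + 2 < p) :
    ∑ i ∈ range (m + 1), bet p i * ((m + 1).choose i : ZMod p) * (1 / 2 : ZMod p) ^ (m + 1 - i) =
      (2 * (1 / 2) ^ (m + 1) - 2) * bet p (m + 1) := by
  have h20 : ((2 : ℕ) : ZMod p) ≠ 0 := nat_ne 2 (by omega) (by omega)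
  have h2 : Red p (1 / 2 : ℚ) (1 / 2) := by
    simpa using Red.one.div (Red.nat (p := p) 2) h20
  have hq : ∑ i ∈ range (m + 1), bernoulli i * ((m + 1).choose i : ℚ) * (1 / 2 : ℚ) ^ (m + 1 - i) =
      ((2 : ℕ) * (1 / 2) ^ (m + 1) - (2 : ℕ)) * bernoulli (m + 1) := by
    have h := bern_half (m + 1)
    rw [Polynomial.bernoulli, Polynomial.eval_finsetSum, Finset.sum_range_succ] at h
    simp only [Polynomial.eval_monomial] at h
    simp only [Nat.choose_self, Nat.cast_one, Nat.sub_self, pow_zero, mul_one] at h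
    push_cast
    linear_combination h
  have h1 : Red p (∑ i ∈ range (m + 1), bernoulli i * ((m + 1).choose i : ℚ) * (1 / 2 : ℚ) ^ (m + 1 - i))
    (∑ i ∈ range (m + 1), bet p i * ((m + 1).choose i : ZMod p) * (1 / 2 : ZMod p) ^ (m + 1 - i)) := by
    apply Red.sum
    intro i hi
    have hi := Finset.mem_range.1 hi
    exact ((red_bern i (by omega)).mul (Red.nat _)).mul (h2.pow _)
  refine h1.unique ?_
  rw [hq]
  have := (((Red.nat (p := p) 2).mul (h2.pow (m + 1))).sub (Red.nat 2)).mul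
    (red_bern (m + 1) (by omega))
  simpa using this

theorem two_n {n : ℕ} (hn : p = 2 * n + 1) : (2 : ZMod p) * n + 1 = 0 := by
  have : ((2 * n + 1 : ℕ) : ZMod p) = 0 := by rw [← hn]; simp
  simpa using this

theorem even_sum {n : ℕ} (hn : p = 2 * n + 1) (t : ℕ) (h0 : 0 < t) (ht : 2 * t < p - 1) :
    ∑ j ∈ range n, ((j + 1 : ℕ) : ZMod p) ^ (2 * t) = 0 := by
  have hall : ∑ x : ZMod p, x ^ (2 * t) = 0 :=
    FiniteField.sum_pow_lt_card_sub_one (ZMod p) _ (by rwa [ZMod.card])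
  have hr : ∑ x : ZMod p, x ^ (2 * t) = ∑ j ∈ range p, (j : ZMod p) ^ (2 * t) := by
    symm
    apply Finset.sum_bij (fun (j : ℕ) _ => (Nat.cast j : ZMod p))
    · simp
    · intro a ha b hb hab
      have ha := Finset.mem_range.1 ha
      have hb := Finset.mem_range.1 hb
      have := (ZMod.natCast_eq_natCast_iff' a b p).1 hab
      rwa [Nat.mod_eq_of_lt ha, Nat.mod_eq_of_lt hb] at this
    · intro b _
      exact ⟨b.val, Finset.mem_range.2 (ZMod.val_lt b), by simp⟩
    · simp
  rw [hr] at hall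
  have h2 : ∑ j ∈ range (2 * n + 1), (j : ZMod p) ^ (2 * t) =
      2 * ∑ j ∈ range n, ((j + 1 : ℕ) : ZMod p) ^ (2 * t) := by
    rw [Finset.sum_range_succ', two_mul n, Finset.sum_range_add, two_mul (Finset.sum _ _)]
    have : ((0 : ℕ) : ZMod p) ^ (2 * t) = 0 := by
      rw [Nat.cast_zero, zero_pow (by omega)]
    rw [this, add_zero]
    congr 1
    rw [← Finset.sum_range_reflect]
    apply Finset.sum_congr rfl
    intro j hj
    have hj := Finset.mem_range.1 hj
    have e : ((n + (n - 1 - j) + 1 : ℕ) : ZMod p) = - ((j + 1 : ℕ) : ZMod p) := by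
      rw [eq_neg_iff_add_eq_zero, ← Nat.cast_add]
      have : n + (n - 1 - j) + 1 + (j + 1) = p := by omega
      rw [this]; simp
    rw [e, Even.neg_pow (even_two_mul t)]
  rw [← hn, hall] at h2
  have h20 : ((2 : ℕ) : ZMod p) ≠ 0 := nat_ne 2 (by omega) (by omega)
  push_cast at h20
  simpa [h20] using h2.symm

theorem cast_choose (i : ℕ) (hi : i < p) : (((p - 1).choose i : ℕ) : ZMod p) = (-1) ^ i := by
  induction i with
  | zero => simp
  | succ i ih =>
    have h := Nat.choose_succ_right_eq (p - 1) i
    have h1 := congrArg (Nat.cast (R := ZMod p)) h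
    have hne := nat_ne (p := p) (i + 1) (by omega) hi
    rw [Nat.cast_mul, Nat.cast_mul, ih (by omega)] at h1
    have e : ((p - 1 - i : ℕ) : ZMod p) = - ((i + 1 : ℕ) : ZMod p) := by
      rw [eq_neg_iff_add_eq_zero, ← Nat.cast_add]
      have : p - 1 - i + (i + 1) = p := by omega
      rw [this]; simp
    rw [e] at h1
    apply mul_right_cancel₀ hne
    rw [h1, pow_succ]; ring

theorem fermat_inv (j : ℕ) (h0 : 0 < j) (h : j < p) : (j : ZMod p) ^ (p - 1) = 1 :=
  ZMod.pow_card_sub_one_eq_one (nat_ne j h0 h)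

theorem H3_eq {n : ℕ} (hn : p = 2 * n + 1) (hp5 : 5 ≤ p) :
    ∑ j ∈ range n, 1 / ((j + 1 : ℕ) : ZMod p) ^ 3 = -2 * bet p (p - 3) := by
  have h20 : ((2 : ℕ) : ZMod p) ≠ 0 := nat_ne 2 (by omega) (by omega)
  have h30 : ((3 : ℕ) : ZMod p) ≠ 0 := nat_ne 3 (by omega) (by omega)
  push_cast at h20 h30
  have hN : ((n + 1 : ℕ) : ZMod p) = 1 / 2 := by
    rw [eq_div_iff h20]; push_cast; linear_combination two_n hn
  have hf := faul (p := p) (p - 4) (n + 1) (by omega)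
  rw [← Finset.sum_div, hN, half_sum (p - 4) (by omega)] at hf
  have e3 : p - 4 + 1 = p - 3 := by omega
  rw [e3] at hf
  have c3 : ((p - 3 : ℕ) : ZMod p) = -3 := by
    rw [Nat.cast_sub (by omega)]; simp
  have hpow : (1 / 2 : ZMod p) ^ (p - 3) = 4 := by
    have h1 : (2 : ZMod p) ^ (p - 1) = 1 := ZMod.pow_card_sub_one_eq_one h20
    have e1 : p - 1 = (p - 3) + 2 := by omega
    rw [e1, pow_add] at h1
    rw [one_div_pow, div_eq_iff (pow_ne_zero _ h20), ← h1]; ring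
  rw [c3, hpow, Finset.sum_range_succ', Nat.cast_zero, zero_pow (by omega), add_zero] at hf
  have : ∑ j ∈ range n, 1 / ((j + 1 : ℕ) : ZMod p) ^ 3 =
      ∑ j ∈ range n, ((j + 1 : ℕ) : ZMod p) ^ (p - 4) := by
    apply Finset.sum_congr rfl
    intro j hj
    have hj := Finset.mem_range.1 hj
    have hne := nat_ne (p := p) (j + 1) (by omega) (by omega)
    rw [div_eq_iff (pow_ne_zero _ hne), ← pow_add, ← fermat_inv (p := p) (j + 1) (by omega) (by omega)]
    congr 1; omega
  rw [this, hf, div_eq_iff (neg_ne_zero.2 h30)]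
  ring

theorem Hj_eq (hp5 : 5 ≤ p) (j : ℕ) (hj : j + 1 < p) :
    ∑ i ∈ range (j + 1), 1 / ((i + 1 : ℕ) : ZMod p) = 1 / ((j + 1 : ℕ) : ZMod p) -
      ∑ i ∈ range (p - 1), bet p i * (-1) ^ i * ((j + 1 : ℕ) : ZMod p) ^ (p - 1 - i) := by
  have hf := faul (p := p) (p - 2) (j + 1) (by omega)
  have e3 : p - 2 + 1 = p - 1 := by omega
  rw [e3, ← Finset.sum_div] at hf
  have c3 : ((p - 1 : ℕ) : ZMod p) = -1 := by
    rw [Nat.cast_sub (by omega)]; simp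
  rw [c3, Finset.sum_range_succ', Nat.cast_zero, zero_pow (by omega), add_zero] at hf
  rw [Finset.sum_range_succ]
  have h1 : ∑ i ∈ range j, 1 / ((i + 1 : ℕ) : ZMod p) =
      ∑ i ∈ range j, ((i + 1 : ℕ) : ZMod p) ^ (p - 2) := by
    apply Finset.sum_congr rfl
    intro i hi
    have hi := Finset.mem_range.1 hi
    have hne := nat_ne (p := p) (i + 1) (by omega) (by omega)
    rw [div_eq_iff hne, ← pow_succ, ← fermat_inv (p := p) (i + 1) (by omega) (by omega)]
    congr 1; omega
  have h2 : ∑ i ∈ range (p - 1), bet p i * (((p - 1).choose i : ℕ) : ZMod p) *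
        ((j + 1 : ℕ) : ZMod p) ^ (p - 1 - i) =
      ∑ i ∈ range (p - 1), bet p i * (-1) ^ i * ((j + 1 : ℕ) : ZMod p) ^ (p - 1 - i) := by
    apply Finset.sum_congr rfl
    intro i hi
    have hi := Finset.mem_range.1 hi
    rw [cast_choose i (by omega)]
  rw [h1, hf, h2]
  ring

theorem bet_odd (i : ℕ) (hi : Odd i) (h1 : 1 < i) : bet p i = 0 := by
  unfold bet; rw [bernoulli_eq_zero_of_odd hi h1]; simp

theorem bet_one (hp5 : 5 ≤ p) : bet p 1 = - 1 / 2 := by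
  have h20 : ((2 : ℕ) : ZMod p) ≠ 0 := nat_ne 2 (by omega) (by omega)
  have := (Red.one.neg.div (Red.nat (p := p) 2) h20).2
  unfold bet
  rw [bernoulli_one]
  simpa using this

theorem S_eq {n : ℕ} (hn : p = 2 * n + 1) (hp5 : 5 ≤ p) :
    ∑ j ∈ range n, (∑ i ∈ range (j + 1), 1 / ((i + 1 : ℕ) : ZMod p)) / ((j + 1 : ℕ) : ZMod p) ^ 2 =
      - (bet p (p - 3) / 2) := by
  have h20 : ((2 : ℕ) : ZMod p) ≠ 0 := nat_ne 2 (by omega) (by omega)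
  push_cast at h20
  have h1 : ∑ j ∈ range n, (∑ i ∈ range (j + 1), 1 / ((i + 1 : ℕ) : ZMod p)) /
        ((j + 1 : ℕ) : ZMod p) ^ 2 =
      ∑ j ∈ range n, 1 / ((j + 1 : ℕ) : ZMod p) ^ 3 - ∑ i ∈ range (p - 1), bet p i * (-1) ^ i *
        ∑ j ∈ range n, ((j + 1 : ℕ) : ZMod p) ^ (p - 1 - i) / ((j + 1 : ℕ) : ZMod p) ^ 2 := by
    simp_rw [Finset.mul_sum]
    rw [Finset.sum_comm, ← Finset.sum_sub_distrib]
    apply Finset.sum_congr rfl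
    intro j hj
    have hj := Finset.mem_range.1 hj
    have hne := nat_ne (p := p) (j + 1) (by omega) (by omega)
    rw [Hj_eq hp5 j (by omega), sub_div, Finset.sum_div, div_div, ← pow_succ']
    congr 1
    apply Finset.sum_congr rfl
    intro i _
    rw [mul_div_assoc]
  have hP : ∀ i, i + 3 ≤ p → ∑ j ∈ range n, ((j + 1 : ℕ) : ZMod p) ^ (p - 1 - i) /
      ((j + 1 : ℕ) : ZMod p) ^ 2 = ∑ j ∈ range n, ((j + 1 : ℕ) : ZMod p) ^ (p - 3 - i) := by
    intro i hi
    apply Finset.sum_congr rfl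
    intro j hj
    have hj := Finset.mem_range.1 hj
    have hne := nat_ne (p := p) (j + 1) (by omega) (by omega)
    rw [div_eq_iff (pow_ne_zero _ hne), ← pow_add]
    congr 1; omega
  have h2 : ∑ i ∈ range (p - 1), bet p i * (-1) ^ i *
        ∑ j ∈ range n, ((j + 1 : ℕ) : ZMod p) ^ (p - 1 - i) / ((j + 1 : ℕ) : ZMod p) ^ 2 =
      ∑ i ∈ ({1, p - 3} : Finset ℕ), bet p i * (-1) ^ i *
        ∑ j ∈ range n, ((j + 1 : ℕ) : ZMod p) ^ (p - 1 - i) / ((j + 1 : ℕ) : ZMod p) ^ 2 := by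
    symm
    apply Finset.sum_subset
    · intro i hi
      simp only [Finset.mem_insert, Finset.mem_singleton] at hi
      rw [Finset.mem_range]; omega
    · intro i hi hi2
      have hi := Finset.mem_range.1 hi
      simp only [Finset.mem_insert, Finset.mem_singleton, not_or] at hi2
      rcases Nat.even_or_odd' i with ⟨t, ht | ht⟩
      · rw [hP i (by omega)]
        have := even_sum hn (n - 1 - t) (by omega) (by omega)
        have e : p - 3 - i = 2 * (n - 1 - t) := by omega
        rw [e, this, mul_zero]
      · rw [bet_odd i ⟨t, ht⟩ (by omega)]; simp
  have h3 : ∑ j ∈ range n, ((j + 1 : ℕ) : ZMod p) ^ (p - 1 - 1) / ((j + 1 : ℕ) : ZMod p) ^ 2 =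
      ∑ j ∈ range n, 1 / ((j + 1 : ℕ) : ZMod p) ^ 3 := by
    apply Finset.sum_congr rfl
    intro j hj
    have hj := Finset.mem_range.1 hj
    have hne := nat_ne (p := p) (j + 1) (by omega) (by omega)
    rw [div_eq_div_iff (pow_ne_zero _ hne) (pow_ne_zero _ hne), pow_succ _ 2, mul_comm (_ ^ 2),
      ← mul_assoc, ← pow_succ]
    have e : p - 1 - 1 + 1 = p - 1 := by omega
    rw [e, fermat_inv (j + 1) (by omega) (by omega)]
  rw [h1, h2, Finset.sum_pair (by omega), h3, hP (p - 3) (by omega), Nat.sub_self, bet_one hp5,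
    H3_eq hn hp5]
  have hev : Even (p - 3) := ⟨n - 1, by omega⟩
  rw [hev.neg_one_pow]
  simp only [pow_zero, Finset.sum_const, Finset.card_range, nsmul_eq_mul, mul_one, pow_one]
  field_simp
  linear_combination (-bet p (p - 3)) * two_n hn

theorem cb_eq {n : ℕ} (hn : p = 2 * n + 1) (k : ℕ) (hk : k ≤ n) :
    (((2 * k).choose k : ℕ) : ZMod p) = (-1) ^ k * 4 ^ k * (n.choose k : ZMod p) := by
  change ((Nat.centralBinom k : ℕ) : ZMod p) = _
  induction k with
  | zero => simp
  | succ k ih =>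
    have ih := ih (by omega)
    have hne := nat_ne (p := p) (k + 1) (by omega) (by omega)
    have h1 := congrArg (Nat.cast (R := ZMod p)) (Nat.succ_mul_centralBinom_succ k)
    have h2 := congrArg (Nat.cast (R := ZMod p)) (Nat.choose_succ_right_eq n k)
    push_cast [Nat.cast_sub (show k ≤ n by omega)] at h1 h2 hne
    apply mul_left_cancel₀ hne
    rw [h1, ih]
    rw [pow_succ, pow_succ]
    linear_combination (4 * (-1) ^ k * 4 ^ k) * h2 +
      (2 * (-1) ^ k * 4 ^ k * (n.choose k : ZMod p)) * two_n hn

theorem lhs_red {n : ℕ} (hn : p = 2 * n + 1) :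
    Red p (∑ k ∈ Finset.Icc 1 n, ((2 * k).choose k : ℚ) / (k * 4 ^ k) * H2 k)
      (TT (fun k => (∑ i ∈ range k, 1 / ((i + 1 : ℕ) : ZMod p) ^ 2) / (k : ZMod p)) n) := by
  have e : TT (fun k => (∑ i ∈ range k, 1 / ((i + 1 : ℕ) : ZMod p) ^ 2) / (k : ZMod p)) n =
      ∑ k ∈ Finset.Icc 1 n, (-1) ^ k * (n.choose k : ZMod p) *
        ((∑ i ∈ range k, 1 / ((i + 1 : ℕ) : ZMod p) ^ 2) / (k : ZMod p)) := by
    unfold TT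
    rw [icc_sum, Finset.sum_range_succ']
    simp
  rw [e]
  have hn0 : n ≠ 0 := by
    rintro rfl
    exact (Fact.out : p.Prime).one_lt.ne' (by omega)
  have h20 : ((2 : ℕ) : ZMod p) ≠ 0 := nat_ne 2 (by omega) (by omega)
  have h40 : ((4 : ℕ) : ZMod p) ≠ 0 := by
    have : ((4 : ℕ) : ZMod p) = ((2 : ℕ) : ZMod p) * ((2 : ℕ) : ZMod p) := by norm_num
    rw [this]; exact mul_ne_zero h20 h20
  apply Red.sum
  intro k hk
  have hk := Finset.mem_Icc.1 hk
  have hne := nat_ne (p := p) k (by omega) (by omega)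
  have hH : Red p (H2 k) (∑ i ∈ range k, 1 / ((i + 1 : ℕ) : ZMod p) ^ 2) := by
    unfold H2
    rw [icc_sum]
    apply Red.sum
    intro i hi
    have hi := Finset.mem_range.1 hi
    exact Red.one.div ((Red.nat _).pow 2) (pow_ne_zero _ (nat_ne _ (by omega) (by omega)))
  have h4 := (Red.nat (p := p) 4).pow k
  have := ((Red.nat (p := p) ((2 * k).choose k)).div ((Red.nat k).mul h4)
    (mul_ne_zero hne (pow_ne_zero _ h40))).mul hH
  rw [cb_eq hn k hk.2] at this
  push_cast at this h40 ⊢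
  convert this using 1
  field_simp

end final

theorem stmt6 (p : ℕ) (hp : p.Prime) (hodd : Odd p) :
    ratModEq p
      (∑ k ∈ Finset.Icc 1 ((p - 1) / 2), ((2 * k).choose k : ℚ) / (k * 4 ^ k) * H2 k)
      (bernoulli (p - 3) / 2) := by

  haveI : Fact p.Prime := ⟨hp⟩
  obtain ⟨n, hn⟩ := hodd
  have en : (p - 1) / 2 = n := by omega
  rw [en]
  by_cases h3 : p = 3
  · subst h3
    have : n = 1 := by omega
    subst this
    have e : (∑ k ∈ Finset.Icc 1 1, ((2 * k).choose k : ℚ) / (k * 4 ^ k) * H2 k) -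
        bernoulli (3 - 3) / 2 = 0 := by
      simp [H2]; norm_num
    unfold ratModEq
    rw [e]; simp
  · have hp5 : 5 ≤ p := by
      have := hp.two_le
      omega
    have h1 := lhs_red hn
    rw [TT_main n (fun k h0 hk => nat_ne k h0 (by omega)), S_eq hn hp5, neg_neg] at h1
    have h20 : ((2 : ℕ) : ZMod p) ≠ 0 := nat_ne 2 (by omega) (by omega)
    have h2 := (red_bern (p := p) (p - 3) (by omega)).div (Red.nat 2) h20
    push_cast at h2
    exact h1.modEq h2
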